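/- For m ≥ 1 and c = 1, the treewidth of the hardware graph F(m,1) equals exactly m. -/

import Mathlib

open SimpleGraph

/-- A tree decomposition of `G` with tree `T` and bags `B`. -/
def IsTreeDecomp {V I : Type} (G : SimpleGraph V) (T : SimpleGraph I)
    (B : I → Finset V) : Prop :=
  T.IsTree ∧
  (∀ v : V, ∃ i : I, v ∈ B i) ∧
  (∀ u v : V, G.Adj u v → ∃ i : I, u ∈ B i ∧ v ∈ B i) ∧
  (∀ v : V, (T.induce {i : I | v ∈ B i}).Connected)

/-- The treewidth of `G`: the least `k` such that `G` has a tree decomposition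
all of whose bags have at most `k + 1` vertices (i.e. width at most `k`). -/
noncomputable def treewidth {V : Type} (G : SimpleGraph V) : ℕ :=
  sInf {k : ℕ | ∃ (I : Type) (T : SimpleGraph I) (B : I → Finset V),
    IsTreeDecomp G T B ∧ ∀ i : I, (B i).card ≤ k + 1}

/-- `H` is a minor of `G`: branch sets are nonempty (connectedness includes
nonemptiness), induce connected subgraphs, are pairwise disjoint, and every
edge of `H` is realized by an edge of `G` between the corresponding branch sets. -/
def IsMinor {V W : Type} (H : SimpleGraph V) (G : SimpleGraph W) : Prop :=
  ∃ φ : V → Set W,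
    (∀ v : V, (G.induce (φ v)).Connected) ∧
    (∀ u v : V, u ≠ v → Disjoint (φ u) (φ v)) ∧
    (∀ u v : V, H.Adj u v → ∃ a ∈ φ u, ∃ b ∈ φ v, G.Adj a b)

/-- The `n × m` two-dimensional grid graph: vertices `(i, j)` are adjacent iff
they differ by exactly 1 in one coordinate and agree in the other. -/
def gridGraph (n m : ℕ) : SimpleGraph (Fin n × Fin m) :=
  SimpleGraph.fromRel (fun p q =>
    (p.1 = q.1 ∧ p.2.val + 1 = q.2.val) ∨ (p.2 = q.2 ∧ p.1.val + 1 = q.1.val))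

/-- The hardware graph `F(m, c)`: an `m × m` grid of `K_{c,c}` unit cells.
A vertex `(a, b, d)` lies in cell `(a, b)`; it is on the left half if `d < c`
and the right half otherwise.  Left and right halves of a cell are completely
joined; left-half vertices are joined to their images in the cell directly
below; right-half vertices are joined to their images in the cell to the right. -/
def hardwareGraph (m c : ℕ) : SimpleGraph (Fin m × Fin m × Fin (2 * c)) :=
  SimpleGraph.fromRel (fun x y =>
    (x.1 = y.1 ∧ x.2.1 = y.2.1 ∧ x.2.2.val < c ∧ c ≤ y.2.2.val) ∨
    (x.2.1 = y.2.1 ∧ x.2.2 = y.2.2 ∧ x.2.2.val < c ∧ x.1.val + 1 = y.1.val) ∨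
    (x.1 = y.1 ∧ x.2.2 = y.2.2 ∧ c ≤ x.2.2.val ∧ x.2.1.val + 1 = y.2.1.val))

/-!
**Lower bound.** Each of the `c * m` wires running along the columns of cells meets each of the
`c * m` wires running along the rows, so `F(m, c)` has a `K_{cm,cm}` minor. Contracting all but one
edge of a perfect matching of it leaves a `K_{cm+1}` minor. In a tree decomposition, the nodes whose
bags meet a connected set form a subtree, so by the Helly property of subtrees some bag meets all
`c * m + 1` branch sets.

**Upper bound.** Each row of cells splits into two layers, the left halves and the right halves.
With the left layer of row `a` as parent of the left layer of row `a + 1` and of the right layer of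
row `a`, the layers form a tree and all edges run within a layer or between a layer and its parent.
Replacing a parent layer by its child column by column, one never holds more than `m + 1` half cells
at a time.
-/

/-! ### Trees given by a parent function -/

section ParentGraph

variable {I : Type*} {p : I → Option I} {ρ : I → ℕ}

/-- The graph joining every `i` to its parent `p i`, if it has one. It presents a rooted forest when
the parents decrease along some rank function. -/
def parentGraph (p : I → Option I) : SimpleGraph I :=
  SimpleGraph.fromRel fun i j => p i = some j

lemma isAcyclic_parentGraph (hρ : ∀ i j, p i = some j → ρ j < ρ i) :
    (parentGraph p).IsAcyclic := by
  classical
  intro v c hc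
  -- Both neighbours on the cycle of a node of maximal rank are its parent.
  obtain ⟨u, hu, hmax⟩ := c.support.toFinset.exists_max_image ρ ⟨v, by simp⟩
  rw [List.mem_toFinset] at hu
  have hparent : ∀ w ∈ (c.rotate u hu).support, (parentGraph p).Adj u w → p u = some w := by
    intro w hw huw
    refine huw.2.resolve_right fun hwu => (hρ w u hwu).not_ge (hmax w ?_)
    simpa using hw
  have hcycle := hc.rotate hu
  have hsnd := hparent _ (Walk.getVert_mem_support _ _) (Walk.adj_snd hcycle.not_nil)
  have hpen := hparent _ (Walk.getVert_mem_support _ _) (Walk.adj_penultimate hcycle.not_nil).symm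
  exact hcycle.snd_ne_penultimate (Option.some.inj (hsnd.symm.trans hpen))

lemma connected_induce_parentGraph (hρ : ∀ i j, p i = some j → ρ j < ρ i) {S : Set I} {t : I}
    (ht : t ∈ S) (hS : ∀ i ∈ S, i ≠ t → ∃ j ∈ S, p i = some j) :
    ((parentGraph p).induce S).Connected := by
  have reachable_top : ∀ n, ∀ i (hi : i ∈ S), ρ i = n →
      ((parentGraph p).induce S).Reachable ⟨i, hi⟩ ⟨t, ht⟩ := by
    intro n
    induction n using Nat.strong_induction_on with
    | _ n ih =>
      rintro i hi rfl
      obtain rfl | hit := eq_or_ne i t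
      · exact Reachable.refl _
      obtain ⟨j, hj, hij⟩ := hS i hi hit
      have hadj : ((parentGraph p).induce S).Adj ⟨i, hi⟩ ⟨j, hj⟩ :=
        ⟨fun h => (hρ i j hij).ne (congrArg ρ h.symm), Or.inl hij⟩
      exact Reachable.trans (Adj.reachable hadj) (ih _ (hρ i j hij) j hj rfl)
  exact (connected_iff_exists_forall_reachable _).2
    ⟨⟨t, ht⟩, fun i => (reachable_top _ i.1 i.2 rfl).symm⟩

lemma isTree_parentGraph (hρ : ∀ i j, p i = some j → ρ j < ρ i) {r : I}
    (hr : ∀ i, i ≠ r → p i ≠ none) : (parentGraph p).IsTree where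
  connected := (induceUnivIso _).connected_iff.1 <|
    connected_induce_parentGraph hρ (Set.mem_univ r) fun i _ hi => by
      simpa using Option.ne_none_iff_exists'.1 (hr i hi)
  isAcyclic := isAcyclic_parentGraph hρ

end ParentGraph

/-! ### The Helly property of subtrees -/

section Helly

variable {I : Type*} {T : SimpleGraph I} {A B C : Set I}

/-- A set of nodes is path-convex if it contains every path between two of its elements; in a tree,
these are the node sets of subtrees and the empty set. -/
def IsPathConvex (T : SimpleGraph I) (S : Set I) : Prop :=
  ∀ ⦃u v : I⦄ (p : T.Walk u v), p.IsPath → u ∈ S → v ∈ S → ∀ w ∈ p.support, w ∈ S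

lemma IsPathConvex.inter (hA : IsPathConvex T A) (hB : IsPathConvex T B) :
    IsPathConvex T (A ∩ B) := fun _ _ p hp hu hv w hw =>
  ⟨hA p hp hu.1 hv.1 w hw, hB p hp hu.2 hv.2 w hw⟩

lemma isPathConvex_of_preconnected_induce (hT : T.IsAcyclic) (hA : (T.induce A).Preconnected) :
    IsPathConvex T A := by
  intro u v p hp hu hv w hw
  obtain ⟨q, hq⟩ := (hA ⟨u, hu⟩ ⟨v, hv⟩).exists_isPath
  let q' : T.Walk u v := q.map (Embedding.induce A).toHom
  have hq' : q'.IsPath := hq.map (Embedding.induce (G := T) A).injective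
  have hpq : p = q' := congrArg Subtype.val <|
    (hT.subsingleton_path u v).elim ⟨p, hp⟩ ⟨q', hq'⟩
  obtain ⟨x, -, rfl⟩ := List.mem_map.1 (Walk.support_map _ q ▸ hpq ▸ hw)
  exact x.2

/-- The case of three sets in the Helly property. The path in `B` from `A` to `C` runs inside the
union of a path in `A` and a path in `C`; it meets `A ∩ C` where it leaves `A`. -/
lemma IsPathConvex.nonempty_inter_inter (hT : T.IsTree) (hA : IsPathConvex T A)
    (hB : IsPathConvex T B) (hC : IsPathConvex T C) (hAB : (A ∩ B).Nonempty)
    (hBC : (B ∩ C).Nonempty) (hAC : (A ∩ C).Nonempty) : (A ∩ B ∩ C).Nonempty := by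
  classical
  obtain ⟨x, hxA, hxB⟩ := hAB
  obtain ⟨y, hyB, hyC⟩ := hBC
  obtain ⟨z, hzA, hzC⟩ := hAC
  obtain ⟨q, hq, -⟩ := hT.existsUnique_path x z
  obtain ⟨r, hr, -⟩ := hT.existsUnique_path z y
  have hp : (q.append r).bypass.IsPath := Walk.bypass_isPath _
  by_cases hyA : y ∈ A
  · exact ⟨y, ⟨hyA, hyB⟩, hyC⟩
  obtain ⟨d, hd, hdA, hdA'⟩ := (q.append r).bypass.exists_boundary_dart A hxA hyA
  have hdr : d.edge ∈ r.edges := by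
    have hdqr : d.edge ∈ q.edges ++ r.edges := by
      rw [← Walk.edges_append]
      exact Walk.edges_bypass_subset_edges _ (List.mem_map_of_mem hd)
    exact (List.mem_append.1 hdqr).resolve_left fun hdq =>
      hdA' (hA q hq hxA hzA _ (q.snd_mem_support_of_mem_edges hdq))
  exact ⟨d.fst, ⟨hdA, hB _ hp hxB hyB _ (Walk.dart_fst_mem_support_of_mem_darts _ hd)⟩,
    hC r hr hzC hyC _ (r.fst_mem_support_of_mem_edges hdr)⟩

lemma exists_forall_mem_of_isPathConvex (hT : T.IsTree) {ι : Type*} (s : Finset ι)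
    {F : ι → Set I} (hF : ∀ i ∈ s, IsPathConvex T (F i))
    (hne : ∀ i ∈ s, ∀ j ∈ s, (F i ∩ F j).Nonempty) : ∃ x, ∀ i ∈ s, x ∈ F i := by
  classical
  induction s using Finset.induction_on generalizing F with
  | empty => exact ⟨hT.connected.nonempty.some, by simp⟩
  | insert a s ha ih =>
    obtain rfl | ⟨b, hb⟩ := s.eq_empty_or_nonempty
    · obtain ⟨x, hx, -⟩ := hne a (by simp) a (by simp)
      exact ⟨x, by simpa using hx⟩
    simp only [Finset.mem_insert, forall_eq_or_imp] at hF hne ⊢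
    obtain ⟨-, hne_s⟩ := hne
    obtain ⟨x, hx⟩ := ih (F := fun i => F i ∩ F a) (fun i hi => (hF.2 i hi).inter hF.1)
      fun i hi j hj => by
        rw [← Set.inter_inter_distrib_right]
        exact (hF.2 i hi).nonempty_inter_inter hT (hF.2 j hj) hF.1 ((hne_s i hi).2 j hj)
          (hne_s j hj).1 (hne_s i hi).1
    exact ⟨x, (hx b hb).2, fun i hi => (hx i hi).1⟩

end Helly

/-! ### Connected sets and minors -/

section Minor

lemma connected_induce_biUnion {V W : Type*} {H : SimpleGraph V} {G : SimpleGraph W}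
    {φ : V → Set W} {X : Set V} (hX : (H.induce X).Connected)
    (hφ : ∀ v ∈ X, (G.induce (φ v)).Connected)
    (hadj : ∀ u ∈ X, ∀ v ∈ X, H.Adj u v → (G.induce (φ u ∪ φ v)).Connected) :
    (G.induce (⋃ v ∈ X, φ v)).Connected := by
  have reachable_of_subset : ∀ {S : Set W} (hS : S ⊆ ⋃ v ∈ X, φ v) (_ : (G.induce S).Connected)
      {a b} (ha : a ∈ S) (hb : b ∈ S),
      (G.induce (⋃ v ∈ X, φ v)).Reachable ⟨a, hS ha⟩ ⟨b, hS hb⟩ := fun hS hconn _ _ ha hb =>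
    (hconn.preconnected ⟨_, ha⟩ ⟨_, hb⟩).map (G.induceHomOfLE hS).toHom
  have subset_biUnion : ∀ v : X, φ v ⊆ ⋃ v ∈ X, φ v := fun v => Set.subset_biUnion_of_mem v.2
  have reachable_of_walk : ∀ {u v : X} (_ : (H.induce X).Walk u v) {a b} (ha : a ∈ φ u)
      (hb : b ∈ φ v), (G.induce (⋃ v ∈ X, φ v)).Reachable
        ⟨a, subset_biUnion u ha⟩ ⟨b, subset_biUnion v hb⟩ := by
    intro u v w
    induction w with
    | nil => exact reachable_of_subset (subset_biUnion _) (hφ _ (Subtype.prop _))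
    | @cons u v _ huv _ ih =>
      intro a b ha hb
      obtain ⟨c, hc⟩ := Set.nonempty_coe_sort.1 (hφ v v.2).nonempty
      exact (reachable_of_subset (Set.union_subset (subset_biUnion u) (subset_biUnion v))
        (hadj u u.2 v v.2 huv) (Or.inl ha) (Or.inr hc)).trans (ih hc hb)
  obtain ⟨u₀, hu₀⟩ := hX.nonempty
  obtain ⟨a₀, ha₀⟩ := Set.nonempty_coe_sort.1 (hφ u₀ hu₀).nonempty
  refine (connected_iff_exists_forall_reachable _).2 ⟨⟨a₀, subset_biUnion ⟨u₀, hu₀⟩ ha₀⟩, ?_⟩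
  rintro ⟨b, hb⟩
  obtain ⟨v, hv, hbv⟩ := Set.mem_iUnion₂.1 hb
  obtain ⟨w⟩ := hX.preconnected ⟨u₀, hu₀⟩ ⟨v, hv⟩
  exact reachable_of_walk w ha₀ hbv

lemma connected_induce_range {V W : Type*} {H : SimpleGraph V} {G : SimpleGraph W}
    (hH : H.Connected) (f : H →g G) : (G.induce (Set.range f)).Connected :=
  hH.map (⟨Set.rangeFactorization f, fun h => f.map_rel h⟩ : H →g G.induce (Set.range f))
    Set.rangeFactorization_surjective

lemma IsMinor.trans {U V W : Type} {K : SimpleGraph U} {H : SimpleGraph V} {G : SimpleGraph W}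
    (hKH : IsMinor K H) (hHG : IsMinor H G) : IsMinor K G := by
  obtain ⟨ψ, hψconn, hψdisj, hψadj⟩ := hKH
  obtain ⟨φ, hφconn, hφdisj, hφadj⟩ := hHG
  refine ⟨fun x => ⋃ v ∈ ψ x, φ v, fun x => ?_, fun x y hxy => ?_, fun x y hxy => ?_⟩
  · refine connected_induce_biUnion (hψconn x) (fun v _ => hφconn v) fun u _ v _ huv => ?_
    obtain ⟨a, ha, b, hb, hab⟩ := hφadj u v huv
    exact connected_induce_union (hφconn u).preconnected (hφconn v).preconnected ha hb hab
  · simp only [Set.disjoint_iUnion_left, Set.disjoint_iUnion_right]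
    exact fun v hv u hu => hφdisj u v ((hψdisj x y hxy).ne_of_mem hu hv)
  · obtain ⟨u, hu, v, hv, huv⟩ := hψadj x y hxy
    obtain ⟨a, ha, b, hb, hab⟩ := hφadj u v huv
    exact ⟨a, Set.mem_biUnion hu ha, b, Set.mem_biUnion hv hb, hab⟩

lemma isMinor_top_option_completeBipartiteGraph (ι : Type) [Nonempty ι] :
    IsMinor (⊤ : SimpleGraph (Option ι)) (completeBipartiteGraph ι ι) := by
  classical
  obtain ⟨i₀⟩ := ‹Nonempty ι›
  -- Contract every edge of the perfect matching `inl i — inr i` except the one at `i₀`.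
  let contract : ι ⊕ ι → Option ι := Sum.elim (fun i => if i = i₀ then none else some i) some
  have fiber_none : contract ⁻¹' {none} = {.inl i₀} := by
    ext (i | i) <;> simp [contract]
  have fiber_some_base : contract ⁻¹' {some i₀} = {.inr i₀} := by
    ext (i | i) <;> simp [contract]
  have fiber_some : ∀ {i}, i ≠ i₀ → contract ⁻¹' {some i} = {.inl i, .inr i} := fun hi => by
    ext (j | j) <;> grind
  have connected_fiber : ∀ o,
      ((completeBipartiteGraph ι ι).induce (contract ⁻¹' {o})).Connected := by
    rintro (_ | i)
    · rw [fiber_none]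
      exact .of_subsingleton
    · obtain rfl | hi := eq_or_ne i i₀
      · rw [fiber_some_base]
        exact .of_subsingleton
      · rw [fiber_some hi]
        exact induce_pair_connected_of_adj (by simp)
  refine ⟨fun o => contract ⁻¹' {o}, connected_fiber,
    fun o o' h => (Set.disjoint_singleton.2 h).preimage contract, ?_⟩
  rintro (_ | i) (_ | j) h
  · exact absurd rfl h
  · exact ⟨.inl i₀, by simp [contract], .inr j, by simp [contract], by simp⟩
  · exact ⟨.inr i, by simp [contract], .inl i₀, by simp [contract], by simp⟩
  · obtain rfl | hi := eq_or_ne i i₀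
    · have hj : j ≠ i := fun hj => h (congrArg some hj.symm)
      exact ⟨.inr i, by simp [contract], .inl j, by simp [contract, hj], by simp⟩
    · exact ⟨.inl i, by simp [contract, hi], .inr j, by simp [contract], by simp⟩

end Minor

/-! ### Treewidth and complete minors -/

section Treewidth

variable {V I : Type} {G : SimpleGraph V} {T : SimpleGraph I} {B : I → Finset V}

lemma IsTreeDecomp.treewidth_le (h : IsTreeDecomp G T B) {k : ℕ} (hB : ∀ i, (B i).card ≤ k + 1) :
    treewidth G ≤ k :=
  Nat.sInf_le ⟨I, T, B, h, hB⟩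

lemma isTreeDecomp_univ [Fintype V] (G : SimpleGraph V) :
    IsTreeDecomp G (⊥ : SimpleGraph Unit) fun _ => Finset.univ :=
  ⟨.of_subsingleton, fun _ => ⟨(), Finset.mem_univ _⟩,
    fun _ _ _ => ⟨(), Finset.mem_univ _, Finset.mem_univ _⟩,
    fun _ => { preconnected := .of_subsingleton, nonempty := ⟨⟨(), Finset.mem_univ _⟩⟩ }⟩

lemma exists_isTreeDecomp_card_le_treewidth [Finite V] (G : SimpleGraph V) :
    ∃ (I : Type) (T : SimpleGraph I) (B : I → Finset V),
      IsTreeDecomp G T B ∧ ∀ i, (B i).card ≤ treewidth G + 1 := by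
  have := Fintype.ofFinite V
  exact Nat.sInf_mem (s := {k | ∃ (I : Type) (T : SimpleGraph I) (B : I → Finset V),
    IsTreeDecomp G T B ∧ ∀ i, (B i).card ≤ k + 1})
    ⟨Fintype.card V, Unit, ⊥, _, isTreeDecomp_univ G, fun _ => Nat.le_succ _⟩

/-- The nodes of a tree decomposition with bags `B` whose bags meet the set `X` of vertices. -/
def meetingNodes (B : I → Finset V) (X : Set V) : Set I :=
  {i | ∃ v ∈ X, v ∈ B i}

lemma IsTreeDecomp.connected_induce_meetingNodes (h : IsTreeDecomp G T B) {X : Set V}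
    (hX : (G.induce X).Connected) : (T.induce (meetingNodes B X)).Connected := by
  have hunion : meetingNodes B X = ⋃ v ∈ X, {i | v ∈ B i} := by
    ext i
    simp [meetingNodes]
  rw [hunion]
  refine connected_induce_biUnion hX (fun v _ => h.2.2.2 v) fun u _ v _ huv => ?_
  exact induce_union_connected (h.2.2.2 u).preconnected (h.2.2.2 v).preconnected (h.2.2.1 u v huv)

variable {ι : Type}

lemma IsTreeDecomp.exists_card_le_of_isMinor_top [Fintype ι] (h : IsTreeDecomp G T B)
    (hG : IsMinor (⊤ : SimpleGraph ι) G) : ∃ i, Fintype.card ι ≤ (B i).card := by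
  obtain ⟨φ, hconn, hdisj, hadj⟩ := hG
  have hnodes : ∀ k, (T.induce (meetingNodes B (φ k))).Connected := fun k =>
    h.connected_induce_meetingNodes (hconn k)
  have hmeet : ∀ k l, (meetingNodes B (φ k) ∩ meetingNodes B (φ l)).Nonempty := by
    intro k l
    obtain rfl | hkl := eq_or_ne k l
    · rw [Set.inter_self]
      exact Set.nonempty_coe_sort.1 (hnodes k).nonempty
    · obtain ⟨a, ha, b, hb, hab⟩ := hadj k l hkl
      obtain ⟨i, hai, hbi⟩ := h.2.2.1 a b hab
      exact ⟨i, ⟨a, ha, hai⟩, b, hb, hbi⟩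
  obtain ⟨i, hi⟩ := exists_forall_mem_of_isPathConvex h.1 Finset.univ
    (fun k _ => isPathConvex_of_preconnected_induce h.1.isAcyclic (hnodes k).preconnected)
    fun k _ l _ => hmeet k l
  choose v hvφ hvB using fun k => hi k (Finset.mem_univ k)
  have hinj : Function.Injective v := fun k l hkl => by
    by_contra hne
    exact (hdisj k l hne).ne_of_mem (hvφ k) (hvφ l) hkl
  exact ⟨i, Finset.card_le_card_of_injOn v (fun k _ => hvB k) hinj.injOn⟩

lemma card_le_treewidth_add_one_of_isMinor_top [Finite V] [Fintype ι]
    (hG : IsMinor (⊤ : SimpleGraph ι) G) : Fintype.card ι ≤ treewidth G + 1 := by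
  obtain ⟨I, T, B, h, hB⟩ := exists_isTreeDecomp_card_le_treewidth G
  obtain ⟨i, hi⟩ := h.exists_card_le_of_isMinor_top hG
  exact hi.trans (hB i)

end Treewidth

/-! ### Sweeping a tree of layers -/

section Sweep

variable {V H : Type} {G : SimpleGraph V} {π : H → Option H} {layer : V → H} {col : V → ℕ}
  {ρ : H → ℕ} {m : ℕ}

/-- The parent function of the tree that carries the bags `sweepBag`. Each node `h` of the tree of
layers given by `π` becomes the descending path `(h, 0), (h, 1), …`, and the paths of the children
of `h` hang from `(h, m)`. -/
def sweepParent (π : H → Option H) (m : ℕ) : H × ℕ → Option (H × ℕ)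
  | (h, b + 1) => some (h, b)
  | (h, 0) => (π h).map fun k => (k, m)

/-- The bag of the node `(h, b)` when the layer `h` replaces its parent column by column: `h` up to
column `b`, and the parent of `h` from column `b` on. The nodes beyond the last column carry
redundant copies of the full layer `h`, which saves a bound on the index. -/
def sweepBag [Fintype V] [DecidableEq H] (π : H → Option H) (layer : V → H) (col : V → ℕ)
    (k : H × ℕ) : Finset V :=
  {v | layer v = k.1 ∧ col v ≤ k.2 ∨ π k.1 = some (layer v) ∧ k.2 ≤ col v}

lemma rank_lt_of_sweepParent_eq_some (hρ : ∀ h k, π h = some k → ρ k < ρ h) (i j : H × ℕ)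
    (hij : sweepParent π m i = some j) : ρ j.1 * (m + 1) + j.2 < ρ i.1 * (m + 1) + i.2 := by
  obtain ⟨h, _ | b⟩ := i
  · obtain ⟨k, hk, rfl⟩ := Option.map_eq_some_iff.1 hij
    nlinarith [hρ h k hk]
  · obtain rfl := Option.some.inj hij
    simp

lemma isTree_parentGraph_sweepParent (hρ : ∀ h k, π h = some k → ρ k < ρ h) {r : H}
    (hr : ∀ h, h ≠ r → π h ≠ none) : (parentGraph (sweepParent π m)).IsTree := by
  refine isTree_parentGraph (rank_lt_of_sweepParent_eq_some hρ) (r := (r, 0)) ?_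
  rintro ⟨h, _ | b⟩ hne
  · simpa [sweepParent] using hr h (by simpa using hne)
  · simp [sweepParent]

variable [Fintype V] [DecidableEq H]

lemma mem_sweepBag {h : H} {b : ℕ} {v : V} : v ∈ sweepBag π layer col (h, b) ↔
    layer v = h ∧ col v ≤ b ∨ π h = some (layer v) ∧ b ≤ col v := by
  simp [sweepBag]

lemma connected_induce_setOf_mem_sweepBag (hρ : ∀ h k, π h = some k → ρ k < ρ h) {v : V}
    (hcol : col v ≤ m) : ((parentGraph (sweepParent π m)).induce
      {i | v ∈ sweepBag π layer col i}).Connected := by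
  refine connected_induce_parentGraph (rank_lt_of_sweepParent_eq_some hρ) (t := (layer v, col v))
    (mem_sweepBag.2 (.inl ⟨rfl, le_rfl⟩)) ?_
  rintro ⟨h, b⟩ hmem hne
  obtain ⟨rfl, hb⟩ | ⟨hπ, hb⟩ := mem_sweepBag.1 hmem <;> obtain _ | b := b
  · exact absurd (by rw [Nat.le_zero.1 hb]) hne
  · have hb' : col v ≤ b := Nat.le_of_lt_succ <| hb.lt_of_ne fun h => hne (by rw [h])
    exact ⟨(layer v, b), mem_sweepBag.2 (.inl ⟨rfl, hb'⟩), rfl⟩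
  · exact ⟨(layer v, m), mem_sweepBag.2 (.inl ⟨rfl, hcol⟩), by simp [sweepParent, hπ]⟩
  · exact ⟨(h, b), mem_sweepBag.2 (.inr ⟨hπ, Nat.le_of_succ_le hb⟩), rfl⟩

lemma isTreeDecomp_sweepBag (hρ : ∀ h k, π h = some k → ρ k < ρ h) {r : H}
    (hr : ∀ h, h ≠ r → π h ≠ none) (hcol : ∀ v, col v ≤ m)
    (hadj : ∀ u v, G.Adj u v → layer u = layer v ∨
      π (layer v) = some (layer u) ∧ col v ≤ col u ∨
      π (layer u) = some (layer v) ∧ col u ≤ col v) :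
    IsTreeDecomp G (parentGraph (sweepParent π m)) (sweepBag π layer col) := by
  refine ⟨isTree_parentGraph_sweepParent hρ hr,
    fun v => ⟨(layer v, col v), mem_sweepBag.2 (.inl ⟨rfl, le_rfl⟩)⟩, fun u v huv => ?_,
    fun v => connected_induce_setOf_mem_sweepBag hρ (hcol v)⟩
  obtain h | h | h := hadj u v huv
  · exact ⟨(layer v, max (col u) (col v)), mem_sweepBag.2 (.inl ⟨h, le_max_left _ _⟩),
      mem_sweepBag.2 (.inl ⟨rfl, le_max_right _ _⟩)⟩
  · exact ⟨(layer v, col v), mem_sweepBag.2 (.inr h), mem_sweepBag.2 (.inl ⟨rfl, le_rfl⟩)⟩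
  · exact ⟨(layer u, col u), mem_sweepBag.2 (.inl ⟨rfl, le_rfl⟩), mem_sweepBag.2 (.inr h)⟩

lemma card_sweepBag_le (hπ : ∀ h, π h ≠ some h) (hcol : ∀ v, col v < m) {c : ℕ}
    (hc : ∀ h b, Finset.card {v | layer v = h ∧ col v = b} ≤ c) (i : H × ℕ) :
    (sweepBag π layer col i).card ≤ c * (m + 1) := by
  obtain ⟨h, b⟩ := i
  -- The cells present in the bag lie in distinct slots `0, …, m`.
  let slot (v : V) : ℕ := if layer v = h then col v else col v + 1
  have hmaps : ∀ v ∈ sweepBag π layer col (h, b), slot v ∈ Finset.range (m + 1) := by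
    intro v _
    have := hcol v
    simp only [slot, Finset.mem_range]
    split_ifs <;> lia
  have hfiber : ∀ s ∈ Finset.range (m + 1),
      Finset.card {v ∈ sweepBag π layer col (h, b) | slot v = s} ≤ c := by
    intro s _
    obtain hempty | ⟨u, hu⟩ :=
      Finset.eq_empty_or_nonempty {v ∈ sweepBag π layer col (h, b) | slot v = s}
    · simp [hempty]
    refine (Finset.card_le_card fun v hv => ?_).trans (hc (layer u) (col u))
    have := hπ h
    simp only [Finset.mem_filter, mem_sweepBag, slot] at hu hv
    simp only [Finset.mem_filter_univ]
    grind
  simpa using Finset.card_le_mul_card_image_of_maps_to hmaps c hfiber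

end Sweep

/-! ### The hardware graph -/

section HardwareGraph

variable {m c : ℕ}

/-- The half row of a vertex of the hardware graph: the index of its row of cells, and whether it
lies in the right half of its cell. -/
def halfRow (c : ℕ) (v : Fin m × Fin m × Fin (2 * c)) : ℕ × Bool :=
  (v.1, decide (c ≤ v.2.2.val))

/-- The parent function of the tree of half rows: the left half rows form a path rooted at row `0`,
and each right half row hangs from the left half row of the same row. -/
def halfRowParent : ℕ × Bool → Option (ℕ × Bool)
  | (a, true) => some (a, false)
  | (a + 1, false) => some (a, false)
  | (0, false) => none

lemma rank_lt_of_halfRowParent_eq_some (h k : ℕ × Bool) (hk : halfRowParent h = some k) :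
    k.1 + k.2.toNat < h.1 + h.2.toNat := by
  obtain ⟨_ | a, _ | _⟩ := h <;> grind [halfRowParent]

lemma halfRowParent_ne_none (h : ℕ × Bool) (hh : h ≠ (0, false)) : halfRowParent h ≠ none := by
  obtain ⟨_ | a, _ | _⟩ := h <;> grind [halfRowParent]

lemma halfRow_of_hardwareGraph_adj (u v : Fin m × Fin m × Fin (2 * c))
    (huv : (hardwareGraph m c).Adj u v) : halfRow c u = halfRow c v ∨
      halfRowParent (halfRow c v) = some (halfRow c u) ∧ v.2.1.val ≤ u.2.1.val ∨
      halfRowParent (halfRow c u) = some (halfRow c v) ∧ u.2.1.val ≤ v.2.1.val := by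
  obtain ⟨-, h | h⟩ := huv <;> grind [halfRow, halfRowParent]

lemma card_halfRow_eq_and_col_eq_le (h : ℕ × Bool) (b : ℕ) :
    Finset.card {v : Fin m × Fin m × Fin (2 * c) | halfRow c v = h ∧ v.2.1.val = b} ≤ c := by
  conv_rhs => rw [← Finset.card_range c]
  refine Finset.card_le_card_of_injOn (fun v => if c ≤ v.2.2.val then v.2.2.val - c else v.2.2.val)
    ?_ ?_
  · intro v _
    grind [Finset.coe_range]
  · rintro ⟨a, b, d⟩ hv ⟨a', b', d'⟩ hv' hd
    grind [halfRow]

lemma treewidth_hardwareGraph_lt (m : ℕ) (hc : 0 < c) :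
    treewidth (hardwareGraph m c) < c * (m + 1) := by
  have hdecomp : IsTreeDecomp (hardwareGraph m c) _ _ :=
    isTreeDecomp_sweepBag rank_lt_of_halfRowParent_eq_some halfRowParent_ne_none
      (fun v => v.2.1.isLt.le) halfRow_of_hardwareGraph_adj
  have hcard := card_sweepBag_le (fun h hh => (rank_lt_of_halfRowParent_eq_some h h hh).ne rfl)
    (fun v => v.2.1.isLt) (card_halfRow_eq_and_col_eq_le (m := m) (c := c))
  have hpos : 0 < c * (m + 1) := by positivity
  have hle := hdecomp.treewidth_le (k := c * (m + 1) - 1) fun i => (hcard i).trans (by lia)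
  exact hle.trans_lt (Nat.sub_one_lt hpos.ne')

/-- The vertex `d` of the left half of the cell `(a, b)`. -/
def leftVertex (a b : Fin m) (d : Fin c) : Fin m × Fin m × Fin (2 * c) :=
  (a, b, ⟨d, by lia⟩)

/-- The vertex `d` of the right half of the cell `(a, b)`. -/
def rightVertex (a b : Fin m) (d : Fin c) : Fin m × Fin m × Fin (2 * c) :=
  (a, b, ⟨c + d, by lia⟩)

lemma hardwareGraph_adj_leftVertex_rightVertex (a b : Fin m) (d e : Fin c) :
    (hardwareGraph m c).Adj (leftVertex a b d) (rightVertex a b e) := by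
  grind [hardwareGraph, fromRel_adj, leftVertex, rightVertex]

/-- The path through the left vertices `d` of the cells in column `b`. -/
@[simps]
def leftWire (b : Fin m) (d : Fin c) : pathGraph m →g hardwareGraph m c where
  toFun a := leftVertex a b d
  map_rel' := by
    grind [pathGraph_adj, hardwareGraph, fromRel_adj, leftVertex]

/-- The path through the right vertices `d` of the cells in row `a`. -/
@[simps]
def rightWire (a : Fin m) (d : Fin c) : pathGraph m →g hardwareGraph m c where
  toFun b := rightVertex a b d
  map_rel' := by
    grind [pathGraph_adj, hardwareGraph, fromRel_adj, rightVertex]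

/-- The branch sets of the complete bipartite minor: the left wires, indexed by `Sum.inl`, and the
right wires, indexed by `Sum.inr`. -/
def wire (m c : ℕ) : (Fin m × Fin c) ⊕ (Fin m × Fin c) → Set (Fin m × Fin m × Fin (2 * c)) :=
  Sum.elim (fun x => Set.range (leftWire x.1 x.2)) fun x => Set.range (rightWire x.1 x.2)

lemma connected_induce_wire (x : (Fin m × Fin c) ⊕ (Fin m × Fin c)) :
    ((hardwareGraph m c).induce (wire m c x)).Connected := by
  have hpath (a : Fin m) : (pathGraph m).Connected :=
    { preconnected := pathGraph_preconnected m, nonempty := ⟨a⟩ }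
  obtain ⟨b, d⟩ | ⟨a, d⟩ := x
  · exact connected_induce_range (hpath b) _
  · exact connected_induce_range (hpath a) _

lemma disjoint_wire {x y : (Fin m × Fin c) ⊕ (Fin m × Fin c)} (hxy : x ≠ y) :
    Disjoint (wire m c x) (wire m c y) := by
  rw [Set.disjoint_left]
  obtain ⟨b, d⟩ | ⟨a, d⟩ := x <;> obtain ⟨b', d'⟩ | ⟨a', d'⟩ := y <;>
    rintro _ ⟨i, rfl⟩ ⟨j, hij⟩ <;>
    simp only [leftWire_apply, rightWire_apply, leftVertex, rightVertex, Prod.mk.injEq,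
      Fin.mk.injEq] at hij <;>
    grind

lemma isMinor_completeBipartiteGraph_hardwareGraph (m c : ℕ) :
    IsMinor (completeBipartiteGraph (Fin m × Fin c) (Fin m × Fin c)) (hardwareGraph m c) := by
  refine ⟨wire m c, connected_induce_wire, fun _ _ => disjoint_wire, ?_⟩
  rintro (⟨b, d⟩ | ⟨a, d⟩) (⟨b', e⟩ | ⟨a', e⟩) hadj
  · simp at hadj
  · exact ⟨_, ⟨a', rfl⟩, _, ⟨b, rfl⟩, hardwareGraph_adj_leftVertex_rightVertex a' b d e⟩
  · exact ⟨_, ⟨b', rfl⟩, _, ⟨a, rfl⟩, (hardwareGraph_adj_leftVertex_rightVertex a b' e d).symm⟩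
  · simp at hadj

lemma mul_le_treewidth_hardwareGraph (m c : ℕ) : c * m ≤ treewidth (hardwareGraph m c) := by
  obtain h | h := isEmpty_or_nonempty (Fin m × Fin c)
  · have hcard : Fintype.card (Fin m × Fin c) = 0 := Fintype.card_eq_zero
    rw [Fintype.card_prod, Fintype.card_fin, Fintype.card_fin, mul_comm] at hcard
    simp [hcard]
  · have hminor := (isMinor_top_option_completeBipartiteGraph (Fin m × Fin c)).trans
      (isMinor_completeBipartiteGraph_hardwareGraph m c)
    simpa [mul_comm c] using card_le_treewidth_add_one_of_isMinor_top hminor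

end HardwareGraph

theorem treewidth_hardwareGraph_c_one_general (m : ℕ) {c : ℕ} (hc : 0 < c) :
    c * m ≤ treewidth (hardwareGraph m c) ∧ treewidth (hardwareGraph m c) < c * (m + 1) :=
  ⟨mul_le_treewidth_hardwareGraph m c, treewidth_hardwareGraph_lt m hc⟩

/-- For `m ≥ 1` and `c = 1`, the treewidth of the hardware graph `F(m, 1)`
equals exactly `m`. -/
theorem treewidth_hardwareGraph_c_one (m : ℕ) (hm : 1 ≤ m) :
    treewidth (hardwareGraph m 1) = m := by
  obtain ⟨hle, hlt⟩ := treewidth_hardwareGraph_c_one_general m one_pos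
  lia
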